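/- Let μ be a Borel probability measure on ℝ with ∫_ℝ e^{itx} dμ(x) = e^{−|t|^α} for all t (0 < α ≤ 2), and let w : ℝ → [0,∞) be an even measurable function with ∫_ℝ |u|^α (1 + |log|u||) w(u) du < ∞. Define h_σ(x) = −α ∫_ℝ (cos(ux) − e^{−|u|^α}) e^{−|u|^α} |u|^α w(u) du, h_α(x) = −∫_ℝ (cos(ux) − e^{−|u|^α}) e^{−|u|^α} |u|^α log|u| w(u) du, B_σ = α ∫_ℝ e^{−2|u|^α} |u|^α w(u) du, and B_α = ∫_ℝ e^{−2|u|^α} |u|^α log|u| w(u) du. Then for every s ∈ ℝ: ∫_ℝ e^{isx} h_σ(x) dμ(x) = B_σ e^{−|s|^α} − α ∫_ℝ e^{−|s−u|^α − |u|^α} |u|^α w(u) du, and ∫_ℝ e^{isx} h_α(x) dμ(x) = B_α e^{−|s|^α} − ∫_ℝ e^{−|s−u|^α − |u|^α} |u|^α log|u| w(u) du. -/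

import Mathlib

open MeasureTheory Real

/-!
For a weight `g` that is even, `∫ cos⟪x, u⟫ g(u) du = ∫ e^{-i⟪x, u⟫} g(u) du`. Multiplying by
`e^{i⟪x, s⟫}` and integrating against `μ` therefore shifts the frequency from `s` to `s - u`, so
Fubini's theorem gives `∫ φ(s - u) g(u) du`, where `φ` is the characteristic function of `μ`. The
centring term `φ(u)` in the estimating function contributes only a multiple of `φ(s)`. With
`g = φ k` and `φ(t) = e^{-|t|^α}`, the two identities are the cases `k(u) = |u|^α w(u)` and
`k(u) = |u|^α log|u| w(u)`.
-/

section Domination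

variable {X 𝕜 : Type*} [MeasurableSpace X] {ν : Measure X} [NormedField 𝕜]

theorem integrable_mul_of_norm_le_of_integrable_mul {a b f : X → 𝕜}
    (ha : AEStronglyMeasurable a ν) (hb : AEStronglyMeasurable b ν) (hba : ∀ x, ‖b x‖ ≤ ‖a x‖)
    (haf : Integrable (fun x => a x * f x) ν) : Integrable (fun x => b x * f x) ν := by
  have hquot : Integrable (fun x => b x / a x * (a x * f x)) ν :=
    haf.bdd_mul (c := 1) (hb.div₀ ha) (.of_forall fun x => by
      rw [norm_div]
      exact div_le_one_of_le₀ (hba x) (norm_nonneg _))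
  refine hquot.congr (.of_forall fun x => ?_)
  have hb0 : a x = 0 → b x = 0 := fun h => norm_le_zero_iff.1 (by simpa [h] using hba x)
  simp only [← mul_assoc, div_mul_cancel_of_imp hb0]

end Domination

section FourierKernel

open scoped RealInnerProductSpace

variable {E : Type*} [SeminormedAddCommGroup E] [InnerProductSpace ℝ E] [MeasurableSpace E]
  {μ ν : Measure E}

theorem exp_inner_mul_integral_exp_inner_neg_mul (g : E → ℂ) (s x : E) :
    Complex.exp (⟪x, s⟫ * Complex.I) * ∫ u, Complex.exp (⟪x, -u⟫ * Complex.I) * g u ∂ν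
      = ∫ u, Complex.exp (⟪x, s - u⟫ * Complex.I) * g u ∂ν := by
  simp only [← integral_const_mul, ← mul_assoc, ← Complex.exp_add, ← add_mul,
    ← Complex.ofReal_add, ← inner_add_right, ← sub_eq_add_neg]

variable [BorelSpace E]

theorem integrable_exp_inner_mul {g : E → ℂ} (hg : Integrable g ν) (x : E) :
    Integrable (fun u => Complex.exp (⟪x, u⟫ * Complex.I) * g u) ν :=
  hg.bdd_mul (c := 1) (by fun_prop) (.of_forall fun _ => (Complex.norm_exp_ofReal_mul_I _).le)

theorem integrable_cos_inner_mul {k : E → ℝ} (hk : Integrable k ν) (x : E) :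
    Integrable (fun u => cos ⟪x, u⟫ * k u) ν :=
  hk.bdd_mul (c := 1) (by fun_prop) (.of_forall fun _ => abs_cos_le_one _)

theorem integral_cos_inner_mul_of_even [ν.IsNegInvariant] {g : E → ℂ} (hg : Integrable g ν)
    (heven : Function.Even g) (x : E) :
    ∫ u, (cos ⟪x, u⟫ : ℂ) * g u ∂ν = ∫ u, Complex.exp (⟪x, -u⟫ * Complex.I) * g u ∂ν := by
  have hreflect : ∫ u, Complex.exp (⟪x, -u⟫ * Complex.I) * g u ∂ν
      = ∫ u, Complex.exp (⟪x, u⟫ * Complex.I) * g u ∂ν := by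
    rw [← integral_neg_eq_self]
    simp only [neg_neg, heven _]
  have hpos := integrable_exp_inner_mul hg x
  have hneg : Integrable (fun u => Complex.exp (⟪x, -u⟫ * Complex.I) * g u) ν := by
    simpa only [heven _] using hpos.comp_neg
  calc ∫ u, (cos ⟪x, u⟫ : ℂ) * g u ∂ν
    _ = ∫ u, (Complex.exp (⟪x, u⟫ * Complex.I) * g u
          + Complex.exp (⟪x, -u⟫ * Complex.I) * g u) / 2 ∂ν := by
        refine integral_congr_ae (.of_forall fun u => ?_)
        simp only [Complex.ofReal_cos, Complex.cos, inner_neg_right, Complex.ofReal_neg]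
        ring
    _ = ∫ u, Complex.exp (⟪x, -u⟫ * Complex.I) * g u ∂ν := by
        rw [integral_div, integral_add hpos hneg, ← hreflect, add_self_div_two]

variable [SecondCountableTopology E] [IsFiniteMeasure μ]

theorem integrable_exp_inner_sub_mul_prod [SFinite ν] {g : E → ℂ} (hg : Integrable g ν) (s : E) :
    Integrable (fun p : E × E => Complex.exp (⟪p.1, s - p.2⟫ * Complex.I) * g p.2) (μ.prod ν) :=
  (hg.comp_snd μ).bdd_mul (c := 1) (by fun_prop)
    (.of_forall fun _ => (Complex.norm_exp_ofReal_mul_I _).le)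

theorem integral_integral_exp_inner_sub_mul [SFinite ν] {g : E → ℂ} (hg : Integrable g ν)
    (s : E) :
    ∫ x, ∫ u, Complex.exp (⟪x, s - u⟫ * Complex.I) * g u ∂ν ∂μ
      = ∫ u, charFun μ (s - u) * g u ∂ν := by
  rw [integral_integral_swap (integrable_exp_inner_sub_mul_prod hg s)]
  simp only [integral_mul_const, charFun_apply]

end FourierKernel

section EstimatingFunction

open scoped RealInnerProductSpace

variable {E : Type*} [SeminormedAddCommGroup E] [InnerProductSpace ℝ E] [MeasurableSpace E]

/-- A component of the estimating function of the equivariant integrated squared error estimator,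
for a model with real characteristic function `φ`. The factor `φ u * k u` stands for the weight
times the derivative of the characteristic function in the parameter, up to a constant factor: in
the stable model `k u` is `|u| ^ α * w u` for the scale and `|u| ^ α * log |u| * w u` for the
exponent. -/
noncomputable def eiseScore (ν : Measure E) (φ k : E → ℝ) (x : E) : ℝ :=
  ∫ u, (cos ⟪x, u⟫ - φ u) * φ u * k u ∂ν

variable {μ ν : Measure E} {φ k : E → ℝ}

theorem even_of_charFun_eq_ofReal (hφ : ∀ t, charFun μ t = φ t) : Function.Even φ := fun t => by
  have h := charFun_neg (μ := μ) (t := t)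
  rwa [hφ, hφ, Complex.conj_ofReal, Complex.ofReal_inj] at h

variable [BorelSpace E] [SecondCountableTopology E] [IsFiniteMeasure μ]

theorem integrable_mul_of_charFun_eq_ofReal (hφ : ∀ t, charFun μ t = φ t) (hk : Integrable k ν) :
    Integrable (fun u => φ u * k u) ν := by
  have hre : φ = fun t => (charFun μ t).re := by simp only [hφ, Complex.ofReal_re]
  have hmeas : Measurable φ := hre ▸ Complex.measurable_re.comp measurable_charFun
  refine hk.bdd_mul (c := μ.real Set.univ) hmeas.aestronglyMeasurable (.of_forall fun t => ?_)
  simpa only [hφ, Complex.norm_real] using norm_charFun_le (μ := μ) t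

theorem ofReal_eiseScore [ν.IsNegInvariant] (hφ : ∀ t, charFun μ t = φ t) (hk : Integrable k ν)
    (heven : Function.Even k) (x : E) :
    (eiseScore ν φ k x : ℂ)
      = ∫ u, Complex.exp (⟪x, -u⟫ * Complex.I) * ((φ u * k u : ℝ) : ℂ) ∂ν
        - ((∫ u, φ u * φ u * k u ∂ν : ℝ) : ℂ) := by
  have hφk := integrable_mul_of_charFun_eq_ofReal hφ hk
  have hφφk := integrable_mul_of_charFun_eq_ofReal hφ hφk
  have hφk_complex : Integrable (fun u => ((φ u * k u : ℝ) : ℂ)) ν := hφk.ofReal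
  have hφk_even : Function.Even fun u => ((φ u * k u : ℝ) : ℂ) := fun u => by
    simp only [even_of_charFun_eq_ofReal hφ u, heven u]
  rw [← integral_cos_inner_mul_of_even hφk_complex hφk_even x]
  simp only [eiseScore, sub_mul, mul_assoc, ← Complex.ofReal_mul]
  rw [integral_sub (integrable_cos_inner_mul hφk x) hφφk, Complex.ofReal_sub,
    integral_complex_ofReal]

theorem integral_exp_inner_mul_eiseScore [SFinite ν] [ν.IsNegInvariant]
    (hφ : ∀ t, charFun μ t = φ t) (hk : Integrable k ν) (heven : Function.Even k) (s : E) :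
    ∫ x, Complex.exp (⟪x, s⟫ * Complex.I) * (eiseScore ν φ k x : ℂ) ∂μ
      = ((∫ u, φ (s - u) * φ u * k u ∂ν : ℝ) : ℂ)
        - ((∫ u, φ u * φ u * k u ∂ν : ℝ) : ℂ) * (φ s : ℂ) := by
  have hφk : Integrable (fun u => ((φ u * k u : ℝ) : ℂ)) ν :=
    (integrable_mul_of_charFun_eq_ofReal hφ hk).ofReal
  have hexp : Integrable (fun x => Complex.exp (⟪x, s⟫ * Complex.I)) μ :=
    .of_bound (by fun_prop) 1 (.of_forall fun _ => (Complex.norm_exp_ofReal_mul_I _).le)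
  simp only [ofReal_eiseScore hφ hk heven, mul_sub, exp_inner_mul_integral_exp_inner_neg_mul]
  rw [integral_sub (integrable_exp_inner_sub_mul_prod hφk s).integral_prod_left
      (hexp.mul_const _), integral_integral_exp_inner_sub_mul hφk, integral_mul_const,
    ← charFun_apply, hφ, mul_comm (φ s : ℂ)]
  simp only [hφ, ← Complex.ofReal_mul, integral_complex_ofReal, mul_assoc]

end EstimatingFunction

section Stable

variable {μ ν : Measure ℝ} [IsFiniteMeasure μ] {α : ℝ} {w k : ℝ → ℝ}

theorem integral_exp_mul_integral_cos_sub_of_stable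
    (hchar : ∀ t : ℝ, ∫ x, Complex.exp (Complex.I * t * x) ∂μ = (exp (-|t| ^ α) : ℂ))
    (hk : Integrable k) (heven : Function.Even k) (s : ℝ) :
    ∫ x, Complex.exp (Complex.I * s * x)
        * ((∫ u : ℝ, (cos (u * x) - exp (-|u| ^ α)) * exp (-|u| ^ α) * k u : ℝ) : ℂ) ∂μ
      = ((∫ u : ℝ, exp (-|s - u| ^ α - |u| ^ α) * k u : ℝ) : ℂ)
        - ((∫ u : ℝ, exp (-2 * |u| ^ α) * k u : ℝ) : ℂ) * (exp (-|s| ^ α) : ℂ) := by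
  have hφ : ∀ t, charFun μ t = (exp (-|t| ^ α) : ℝ) := fun t => by
    simp only [charFun_apply_real, ← hchar, mul_comm Complex.I, mul_right_comm]
  have hinner : ∀ x u : ℝ, inner ℝ x u = u * x := fun _ _ => rfl
  have hphase : ∀ x : ℝ, (s : ℂ) * x * Complex.I = Complex.I * s * x := fun x => by ring
  have htransform := integral_exp_inner_mul_eiseScore (ν := volume) hφ hk heven s
  simpa only [eiseScore, hinner, Complex.ofReal_mul, hphase, ← exp_add, ← sub_eq_add_neg,
    ← two_mul, mul_neg, ← neg_mul] using htransform

theorem integrable_rpow_abs_mul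
    (hwi : Integrable (fun u => |u| ^ α * (1 + abs (log |u|)) * w u) ν) :
    Integrable (fun u => |u| ^ α * w u) ν := by
  refine integrable_mul_of_norm_le_of_integrable_mul (a := fun u => |u| ^ α * (1 + abs (log |u|)))
    (by fun_prop : Measurable _).aestronglyMeasurable
    (by fun_prop : Measurable _).aestronglyMeasurable (fun u => ?_) hwi
  rw [norm_mul, norm_of_nonneg (by positivity : 0 ≤ 1 + abs (log |u|))]
  exact le_mul_of_one_le_right (norm_nonneg _) (le_add_of_nonneg_right (abs_nonneg _))

theorem integrable_rpow_abs_mul_log_abs_mul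
    (hwi : Integrable (fun u => |u| ^ α * (1 + abs (log |u|)) * w u) ν) :
    Integrable (fun u => |u| ^ α * log |u| * w u) ν := by
  refine integrable_mul_of_norm_le_of_integrable_mul (a := fun u => |u| ^ α * (1 + abs (log |u|)))
    (by fun_prop : Measurable _).aestronglyMeasurable
    (by fun_prop : Measurable _).aestronglyMeasurable (fun u => ?_) hwi
  rw [norm_mul, norm_mul, norm_of_nonneg (by positivity : 0 ≤ 1 + abs (log |u|))]
  gcongr
  exact le_add_of_nonneg_left zero_le_one

end Stable

theorem stmt11_general (μ : Measure ℝ) [IsFiniteMeasure μ] (α : ℝ)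
    (hchar : ∀ t : ℝ, ∫ x, Complex.exp (Complex.I * t * x) ∂μ = (exp (-|t| ^ α) : ℂ))
    (w : ℝ → ℝ) (hwe : ∀ u, w (-u) = w u)
    (hwi : Integrable (fun u => |u| ^ α * (1 + abs (log |u|)) * w u)) (s : ℝ) :
    (∫ x, Complex.exp (Complex.I * s * x)
        * ((-α * ∫ u : ℝ, (cos (u * x) - exp (-|u| ^ α))
              * exp (-|u| ^ α) * |u| ^ α * w u : ℝ) : ℂ) ∂μ
      = ((α * ∫ u : ℝ, exp (-2 * |u| ^ α) * |u| ^ α * w u : ℝ) : ℂ)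
          * (exp (-|s| ^ α) : ℂ)
        - (α : ℂ) * ((∫ u : ℝ, exp (-|s - u| ^ α - |u| ^ α) * |u| ^ α * w u : ℝ) : ℂ)) ∧
    (∫ x, Complex.exp (Complex.I * s * x)
        * ((-∫ u : ℝ, (cos (u * x) - exp (-|u| ^ α))
              * exp (-|u| ^ α) * |u| ^ α * log |u| * w u : ℝ) : ℂ) ∂μ
      = ((∫ u : ℝ, exp (-2 * |u| ^ α) * |u| ^ α * log |u| * w u : ℝ) : ℂ)
          * (exp (-|s| ^ α) : ℂ)
        - ((∫ u : ℝ,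
              exp (-|s - u| ^ α - |u| ^ α) * |u| ^ α * log |u| * w u : ℝ) : ℂ)) := by
  have hscale := integral_exp_mul_integral_cos_sub_of_stable hchar
    (integrable_rpow_abs_mul hwi) (fun u => by simp only [abs_neg, hwe]) s
  have hexponent := integral_exp_mul_integral_cos_sub_of_stable hchar
    (integrable_rpow_abs_mul_log_abs_mul hwi) (fun u => by simp only [abs_neg, hwe]) s
  simp only [← mul_assoc] at hscale hexponent
  constructor
  · simp only [Complex.ofReal_mul, Complex.ofReal_neg, mul_left_comm _ (-(α : ℂ))]
    rw [integral_const_mul, hscale]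
    ring
  · simp only [Complex.ofReal_neg, mul_neg]
    rw [integral_neg, hexponent]
    ring

/-- Fourier-kernel transforms of the EISE scale and characteristic-exponent
estimating functions. -/
theorem stmt11 (μ : Measure ℝ) [IsProbabilityMeasure μ] (α : ℝ) (hα : α ∈ Set.Ioc (0 : ℝ) 2)
    (hchar : ∀ t : ℝ, ∫ x, Complex.exp (Complex.I * t * x) ∂μ = (Real.exp (-|t| ^ α) : ℂ))
    (w : ℝ → ℝ) (hw0 : ∀ u, 0 ≤ w u) (hwe : ∀ u, w (-u) = w u) (hwm : Measurable w)
    (hwi : Integrable (fun u => |u| ^ α * (1 + abs (Real.log |u|)) * w u)) (s : ℝ) :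
    (∫ x, Complex.exp (Complex.I * s * x)
        * ((-α * ∫ u : ℝ, (Real.cos (u * x) - Real.exp (-|u| ^ α))
              * Real.exp (-|u| ^ α) * |u| ^ α * w u : ℝ) : ℂ) ∂μ
      = ((α * ∫ u : ℝ, Real.exp (-2 * |u| ^ α) * |u| ^ α * w u : ℝ) : ℂ)
          * (Real.exp (-|s| ^ α) : ℂ)
        - (α : ℂ) * ((∫ u : ℝ, Real.exp (-|s - u| ^ α - |u| ^ α) * |u| ^ α * w u : ℝ) : ℂ)) ∧
    (∫ x, Complex.exp (Complex.I * s * x)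
        * ((-∫ u : ℝ, (Real.cos (u * x) - Real.exp (-|u| ^ α))
              * Real.exp (-|u| ^ α) * |u| ^ α * Real.log |u| * w u : ℝ) : ℂ) ∂μ
      = ((∫ u : ℝ, Real.exp (-2 * |u| ^ α) * |u| ^ α * Real.log |u| * w u : ℝ) : ℂ)
          * (Real.exp (-|s| ^ α) : ℂ)
        - ((∫ u : ℝ, Real.exp (-|s - u| ^ α - |u| ^ α) * |u| ^ α * Real.log |u| * w u : ℝ) : ℂ)) := by
  exact stmt11_general μ α hchar w hwe hwi s
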